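/- arXiv:1508.06778 — 10 statements merged into one kernel-verified Lean document; each statement's English description precedes it below -/
import Mathlib

section
/- Suppose the comparison graph G is connected. Then the matrix L + (1/n)•J is invertible, and the vector q := (L + (1/n)•J)⁻¹ *ᵥ s satisfies L *ᵥ q = s and ∑ i, q i = 0; moreover, q is the unique vector with these two properties (Theorem 3.1: the unique least squares rating equals (L + (1/n)J)⁻¹ s). -/
open Matrix Finset

/-!
Write `B = L + (1/n) J`. Since `(L x) i = ∑ j, M i j * (x i - x j)` with `M` symmetric, the entries
of `L x` always sum to zero, so `B` preserves the coordinate sum of a vector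
(`sum_bordered_mulVec`). Hence `B x = y` with `∑ y = 0` is equivalent to `L x = y` and `∑ x = 0`.

`B` is injective: if `B x = 0`, then `∑ x = 0` and `L x = 0`. The Dirichlet form
`2 xᵀ L x = ∑ i j, M i j * (x i - x j)²` then vanishes, so `x` agrees at the ends of every edge and
is constant on the connected graph (`const_of_laplacian_eq_zero`); a constant vector of sum zero
is zero. The claim follows because the scores sum to zero by skew-symmetry of the results matrix.
-/

/-- A double sum of a skew-symmetric array vanishes. -/
lemma sum_sum_eq_zero_of_skew {n : ℕ} (F : Fin n → Fin n → ℝ) (hF : ∀ i j, F j i = -F i j) :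
    ∑ i, ∑ j, F i j = 0 := by
  have h : ∑ i, ∑ j, F i j = -∑ i, ∑ j, F i j := by
    conv_lhs => rw [Finset.sum_comm]
    simp only [← Finset.sum_neg_distrib]
    exact Finset.sum_congr rfl fun i _ => Finset.sum_congr rfl fun j _ => hF i j
  linarith

lemma laplacian_mulVec_apply {n : ℕ} {M L : Matrix (Fin n) (Fin n) ℝ} {d : Fin n → ℝ}
    (hMdiag : ∀ i, M i i = 0) (hd : ∀ i, d i = ∑ j, M i j)
    (hL : ∀ i j, L i j = if i = j then d i else -M i j) (x : Fin n → ℝ) (i : Fin n) :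
    (L *ᵥ x) i = ∑ j, M i j * (x i - x j) := by
  have h : ∀ j, L i j * x j = (if i = j then d i * x i else 0) - M i j * x j := by
    intro j
    rw [hL]
    split_ifs with hij
    · subst hij
      simp [hMdiag]
    · ring
  simp only [Matrix.mulVec, dotProduct, h, Finset.sum_sub_distrib, mul_sub, ← Finset.sum_mul,
    ← hd, Finset.sum_ite_eq, Finset.mem_univ, if_true]

/-- `L + (1/n) J` adds the mean of `x` to every entry of `L x`. -/
lemma bordered_mulVec_apply {n : ℕ} {L J : Matrix (Fin n) (Fin n) ℝ} (hJ : ∀ i j, J i j = 1)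
    (x : Fin n → ℝ) (i : Fin n) :
    ((L + (1 / (n : ℝ)) • J) *ᵥ x) i = (L *ᵥ x) i + (1 / (n : ℝ)) * ∑ j, x j := by
  rw [Matrix.add_mulVec, Matrix.smul_mulVec]
  simp [Matrix.mulVec, dotProduct, hJ]

lemma sum_bordered_mulVec {n : ℕ} (hn : n ≠ 0) {L J : Matrix (Fin n) (Fin n) ℝ}
    (hJ : ∀ i j, J i j = 1) (hsum : ∀ x : Fin n → ℝ, ∑ i, (L *ᵥ x) i = 0) (x : Fin n → ℝ) :
    ∑ i, ((L + (1 / (n : ℝ)) • J) *ᵥ x) i = ∑ i, x i := by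
  have hn' : (n : ℝ) ≠ 0 := Nat.cast_ne_zero.mpr hn
  simp only [bordered_mulVec_apply hJ, Finset.sum_add_distrib, hsum, Finset.sum_const,
    Finset.card_univ, Fintype.card_fin, nsmul_eq_mul]
  field_simp
  ring

/-- The kernel of a weighted Laplacian on a connected graph consists of constant vectors. -/
lemma const_of_laplacian_eq_zero {n : ℕ} {M : Matrix (Fin n) (Fin n) ℝ}
    (hMsymm : ∀ i j, M j i = M i j) (hMnonneg : ∀ i j, 0 ≤ M i j)
    {G : SimpleGraph (Fin n)} (hG : ∀ i j, G.Adj i j → 0 < M i j) (hconn : G.Connected)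
    {x : Fin n → ℝ} (hx : ∀ i, ∑ j, M i j * (x i - x j) = 0) (i j : Fin n) : x i = x j := by
  have henergy : ∑ i, ∑ j, M i j * (x i - x j) ^ 2 = 0 := by
    have h1 : ∑ i, ∑ j, x i * (M i j * (x i - x j)) = 0 := by
      simp [← Finset.mul_sum, hx]
    -- Symmetrizing: `M (xᵢ - xⱼ)²` and `2 M xᵢ (xᵢ - xⱼ)` differ by a skew-symmetric array.
    have h2 := sum_sum_eq_zero_of_skew
      (fun i j => M i j * (x i - x j) ^ 2 - 2 * (x i * (M i j * (x i - x j))))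
      (fun i j => by simp only [hMsymm i j]; ring)
    simp only [Finset.sum_sub_distrib, ← Finset.mul_sum] at h1 h2
    linarith
  have hnn : ∀ i j, 0 ≤ M i j * (x i - x j) ^ 2 := fun i j =>
    mul_nonneg (hMnonneg i j) (sq_nonneg _)
  have hedge : ∀ i j, G.Adj i j → x i = x j := by
    intro i j hij
    have h1 := (Finset.sum_eq_zero_iff_of_nonneg
      fun i _ => Finset.sum_nonneg fun j _ => hnn i j).mp henergy i (Finset.mem_univ i)
    have h2 := (Finset.sum_eq_zero_iff_of_nonneg fun j _ => hnn i j).mp h1 j (Finset.mem_univ j)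
    have h3 := (mul_eq_zero.mp h2).resolve_left (hG i j hij).ne'
    exact sub_eq_zero.mp (pow_eq_zero_iff two_ne_zero |>.mp h3)
  obtain ⟨p⟩ := hconn.preconnected i j
  induction p with
  | nil => rfl
  | cons hadj _ ih => exact (hedge _ _ hadj).trans ih

/-- Theorem 3.1: if the comparison graph is connected, then `L + (1/n)•J` is invertible
and `q = (L + (1/n)•J)⁻¹ *ᵥ s` is the unique vector with `L *ᵥ q = s` and `∑ i, q i = 0`. -/
theorem least_squares_solution (n : ℕ) (hn : 2 ≤ n)
    (M A : Matrix (Fin n) (Fin n) ℝ)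
    (hMsymm : ∀ i j, M j i = M i j)
    (hMnonneg : ∀ i j, 0 ≤ M i j)
    (hMdiag : ∀ i, M i i = 0)
    (hAskew : ∀ i j, A j i = -A i j)
    (hAM : ∀ i j, M i j = 0 → A i j = 0)
    (e : Fin n → ℝ) (he : ∀ i, e i = 1)
    (J : Matrix (Fin n) (Fin n) ℝ) (hJ : ∀ i j, J i j = 1)
    (s : Fin n → ℝ) (hs : s = A *ᵥ e)
    (d : Fin n → ℝ) (hd : ∀ i, d i = ∑ j, M i j)
    (L : Matrix (Fin n) (Fin n) ℝ)
    (hL : ∀ i j, L i j = if i = j then d i else -M i j)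
    (G : SimpleGraph (Fin n))
    (hG : ∀ i j, G.Adj i j ↔ i ≠ j ∧ 0 < M i j)
    (hconn : G.Connected) :
    IsUnit (L + (1 / (n : ℝ)) • J) ∧
    L *ᵥ ((L + (1 / (n : ℝ)) • J)⁻¹ *ᵥ s) = s ∧
    (∑ i, ((L + (1 / (n : ℝ)) • J)⁻¹ *ᵥ s) i) = 0 ∧
    ∀ q' : Fin n → ℝ, L *ᵥ q' = s → (∑ i, q' i) = 0 →
      q' = (L + (1 / (n : ℝ)) • J)⁻¹ *ᵥ s := by
  have hn0 : n ≠ 0 := by omega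
  have hLx := laplacian_mulVec_apply hMdiag hd hL
  have hsumL : ∀ x : Fin n → ℝ, ∑ i, (L *ᵥ x) i = 0 := fun x => by
    simp only [hLx]
    exact sum_sum_eq_zero_of_skew _ fun i j => by rw [hMsymm i j]; ring
  have hsums : ∑ i, s i = 0 := by
    simp only [hs, Matrix.mulVec, dotProduct, he, mul_one]
    exact sum_sum_eq_zero_of_skew _ hAskew
  have hB := bordered_mulVec_apply (L := L) hJ
  have hsumB := sum_bordered_mulVec hn0 hJ hsumL
  have hunit : IsUnit (L + (1 / (n : ℝ)) • J) := by
    rw [← Matrix.mulVec_injective_iff_isUnit]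
    refine (injective_iff_map_eq_zero (L + (1 / (n : ℝ)) • J).mulVecLin).mpr fun x hx => ?_
    rw [Matrix.mulVecLin_apply] at hx
    have hx0 : ∑ i, x i = 0 := by rw [← hsumB x, hx]; simp
    have hker : ∀ i, ∑ j, M i j * (x i - x j) = 0 := fun i => by
      have h := hB x i
      rw [hx, hx0, hLx] at h
      simpa using h.symm
    have hconst := const_of_laplacian_eq_zero hMsymm hMnonneg
      (fun i j h => ((hG i j).mp h).2) hconn hker
    funext i
    have h : ∑ j, x j = n * x i := by
      rw [Finset.sum_congr rfl fun j _ => hconst j i]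
      simp
    rw [hx0] at h
    exact (mul_eq_zero.mp h.symm).resolve_left (Nat.cast_ne_zero.mpr hn0)
  have hdet := (Matrix.isUnit_iff_isUnit_det _).mp hunit
  have hBq : (L + (1 / (n : ℝ)) • J) *ᵥ ((L + (1 / (n : ℝ)) • J)⁻¹ *ᵥ s) = s := by
    rw [Matrix.mulVec_mulVec, Matrix.mul_nonsing_inv _ hdet, Matrix.one_mulVec]
  have hq0 : ∑ i, ((L + (1 / (n : ℝ)) • J)⁻¹ *ᵥ s) i = 0 := by
    rw [← hsumB, hBq, hsums]
  refine ⟨hunit, ?_, hq0, fun q' hq' hq'0 => ?_⟩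
  · funext i
    have h := hB ((L + (1 / (n : ℝ)) • J)⁻¹ *ᵥ s) i
    rw [hBq, hq0] at h
    simpa using h.symm
  · have h : (L + (1 / (n : ℝ)) • J) *ᵥ q' = s := by
      funext i
      rw [hB, hq', hq'0]
      simp
    rw [← h, Matrix.mulVec_mulVec, Matrix.nonsing_inv_mul _ hdet, Matrix.one_mulVec]
end

section
/- Suppose the comparison graph G is connected and G is not regular bipartite, and let q be the unique vector with L *ᵥ q = s and ∑ i, q i = 0. Then the series ∑_{k=0}^∞ (1/𝔡) • (P^k *ᵥ s) converges to q; formally, HasSum (fun k : ℕ => (1/𝔡) • (P^k *ᵥ s)) q (Theorem 4.1: decomposition of the least squares rating as a Neumann series in the stochastic matrix P). -/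
/-!
Since `L = 𝔡 • 1 - C`, the equation `L *ᵥ q = s` says `(1/𝔡) • s = q - P *ᵥ q`, so the series is
`∑ P ^ k *ᵥ (q - P *ᵥ q)`. The matrix `P` is symmetric; expanding `q` in an orthonormal eigenbasis
turns the series into finitely many geometric series `∑ c (1 - μ) μ ^ k`, each with sum `c` when
`|μ| < 1`, and identically zero when `c = 0` (`hasSum_pow_mulVec_sub`).

The eigenvalues are controlled by the quadratic forms
`2 vᵀ(𝔡 - C)v = ∑ M i j (v i - v j)²` and
`2 vᵀ(𝔡 + C)v = ∑ M i j (v i + v j)² + 4 ∑ (𝔡 - d i) (v i)²`.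
Both are nonnegative, so `|μ| ≤ 1`. If `μ = 1`, the first one vanishes and `v` is constant on the
connected graph, hence orthogonal to `q`. If `μ = -1`, the second one vanishes: `v` changes sign
along every edge, so `|v|` is a nonzero constant, every degree is `𝔡`, and the sign of `v` is a
two-colouring, which is excluded.
-/

open Matrix Finset

/-- If every eigenvector of the symmetric matrix `P` either has eigenvalue of modulus less than `1`
or is orthogonal to `q`, then the Neumann series of `P` applied to `q - P *ᵥ q` converges to `q`. -/
theorem hasSum_pow_mulVec_sub {n : ℕ} (P : Matrix (Fin n) (Fin n) ℝ) (hP : P.IsHermitian)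
    (q : Fin n → ℝ)
    (h : ∀ (μ : ℝ) (v : Fin n → ℝ), v ≠ 0 → P *ᵥ v = μ • v → |μ| < 1 ∨ v ⬝ᵥ q = 0) :
    HasSum (fun k : ℕ => P ^ k *ᵥ (q - P *ᵥ q)) q := by
  set v : Fin n → Fin n → ℝ := fun i => (hP.eigenvectorBasis i).ofLp with hv
  set μ : Fin n → ℝ := hP.eigenvalues with hμ
  have hPv : ∀ i, P *ᵥ v i = μ i • v i := fun i => hP.mulVec_eigenvectorBasis i
  have hv0 : ∀ i, v i ≠ 0 := by
    intro i h0
    apply hP.eigenvectorBasis.orthonormal.ne_zero i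
    ext j
    exact congrFun h0 j
  have hq : ∑ i, (v i ⬝ᵥ q) • v i = q := by
    have := congrArg WithLp.ofLp (hP.eigenvectorBasis.sum_repr' (WithLp.toLp 2 q))
    simpa [hv, EuclideanSpace.inner_eq_star_dotProduct, dotProduct_comm] using this
  have hpow : ∀ i (k : ℕ), P ^ k *ᵥ v i = μ i ^ k • v i := by
    intro i k
    induction k with
    | zero => simp
    | succ k ih => rw [pow_succ, ← mulVec_mulVec, hPv, mulVec_smul, ih, smul_smul, pow_succ']
  have hterm : ∀ k : ℕ, P ^ k *ᵥ (q - P *ᵥ q)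
      = ∑ i, (μ i ^ k * ((1 - μ i) * (v i ⬝ᵥ q))) • v i := by
    intro k
    have h1 : q - P *ᵥ q = ∑ i, ((1 - μ i) * (v i ⬝ᵥ q)) • v i := by
      conv_lhs => rw [← hq]
      rw [mulVec_sum, ← Finset.sum_sub_distrib]
      refine Finset.sum_congr rfl fun i _ => ?_
      rw [mulVec_smul, hPv]
      module
    rw [h1, mulVec_sum]
    refine Finset.sum_congr rfl fun i _ => ?_
    rw [mulVec_smul, hpow, smul_smul, mul_comm]
  simp_rw [hterm]
  have key : HasSum (fun k : ℕ => ∑ i, (μ i ^ k * ((1 - μ i) * (v i ⬝ᵥ q))) • v i)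
      (∑ i, (v i ⬝ᵥ q) • v i) := by
    refine hasSum_sum fun i _ => HasSum.smul_const ?_ (v i)
    rcases h (μ i) (v i) (hv0 i) (hPv i) with h1 | h1
    · have h2 := (hasSum_geometric_of_abs_lt_one h1).mul_right ((1 - μ i) * (v i ⬝ᵥ q))
      have h3 : (1 - μ i) ≠ 0 := by
        have := (abs_lt.1 h1).2
        linarith
      rwa [inv_mul_cancel_left₀ h3] at h2
    · simp [h1]
  rwa [hq] at key

/-- The quadratic forms of `𝔡 - C` (for `ε = -1`) and `𝔡 + C` (for `ε = 1`), up to a factor `2`,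
evaluated at an eigenvector of `C`. -/
theorem quadratic_form_eigenvector {n : ℕ} (M C : Matrix (Fin n) (Fin n) ℝ)
    (hMsymm : ∀ i j, M j i = M i j) (hMdiag : ∀ i, M i i = 0)
    (d : Fin n → ℝ) (hd : ∀ i, d i = ∑ j, M i j) (D : ℝ)
    (hC : ∀ i j, C i j = if i = j then D - d i else M i j)
    (v : Fin n → ℝ) (μ ε : ℝ) (hv : C *ᵥ v = (D * μ) • v) (hε : ε ^ 2 = 1) :
    ∑ i, ∑ j, M i j * (v i + ε * v j) ^ 2 + 2 * (1 + ε) * ∑ i, (D - d i) * v i ^ 2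
      = 2 * D * (1 + ε * μ) * ∑ i, v i ^ 2 := by
  have hrow : ∀ i, ∑ j, M i j * v j = D * μ * v i - (D - d i) * v i := by
    intro i
    have h1 := congrFun hv i
    have h2 : (C *ᵥ v) i = ∑ j, (M i j * v j + if i = j then (D - d i) * v j else 0) := by
      rw [mulVec, dotProduct]
      refine Finset.sum_congr rfl fun j _ => ?_
      rw [hC]
      split_ifs with hij
      · subst hij
        rw [hMdiag]
        ring
      · ring
    rw [h2, Finset.sum_add_distrib, Finset.sum_ite_eq] at h1
    simp at h1
    linarith
  have e1 : ∑ i, ∑ j, M i j * v i ^ 2 = ∑ i, d i * v i ^ 2 := by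
    simp_rw [hd, Finset.sum_mul]
  have e2 : ∑ i, ∑ j, M i j * v j ^ 2 = ∑ i, d i * v i ^ 2 := by
    rw [Finset.sum_comm, ← e1]
    simp_rw [hMsymm]
  have e3 : ∑ i, ∑ j, M i j * (v i * v j) = ∑ i, (D * μ * v i - (D - d i) * v i) * v i := by
    refine Finset.sum_congr rfl fun i _ => ?_
    rw [← hrow, Finset.sum_mul]
    exact Finset.sum_congr rfl fun j _ => by ring
  have e4 : ∑ i, ∑ j, M i j * (v i + ε * v j) ^ 2
      = ∑ i, ∑ j, M i j * v i ^ 2 + ∑ i, ∑ j, M i j * v j ^ 2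
        + 2 * ε * ∑ i, ∑ j, M i j * (v i * v j) := by
    simp_rw [Finset.mul_sum, ← Finset.sum_add_distrib]
    refine Finset.sum_congr rfl fun i _ => Finset.sum_congr rfl fun j _ => ?_
    linear_combination (M i j * v j ^ 2) * hε
  rw [e4, e1, e2, e3]
  simp_rw [Finset.mul_sum, ← Finset.sum_add_distrib]
  refine Finset.sum_congr rfl fun i _ => ?_
  ring

theorem eq_of_adj_of_connected {V α : Type*} {G : SimpleGraph V} (hG : G.Connected) (f : V → α)
    (h : ∀ i j, G.Adj i j → f i = f j) (i j : V) : f i = f j := by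
  obtain ⟨w⟩ := hG.preconnected i j
  induction w with
  | nil => rfl
  | cons hadj _ ih => exact (h _ _ hadj).trans ih

/-- Theorem 4.1: if the comparison graph is connected and not regular bipartite, then the
least squares rating `q` equals the Neumann series `∑_{k} (1/𝔡) • (P^k *ᵥ s)`. -/
theorem least_squares_neumann_series (n : ℕ) (hn : 2 ≤ n)
    (M A : Matrix (Fin n) (Fin n) ℝ)
    (hMsymm : ∀ i j, M j i = M i j)
    (hMnonneg : ∀ i j, 0 ≤ M i j)
    (hMdiag : ∀ i, M i i = 0)
    (hAskew : ∀ i j, A j i = -A i j)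
    (hAM : ∀ i j, M i j = 0 → A i j = 0)
    (e : Fin n → ℝ) (he : ∀ i, e i = 1)
    (s : Fin n → ℝ) (hs : s = A *ᵥ e)
    (d : Fin n → ℝ) (hd : ∀ i, d i = ∑ j, M i j)
    (L : Matrix (Fin n) (Fin n) ℝ)
    (hL : ∀ i j, L i j = if i = j then d i else -M i j)
    (𝔡 : ℝ) (h𝔡 : IsGreatest (Set.range d) 𝔡)
    (C : Matrix (Fin n) (Fin n) ℝ)
    (hC : ∀ i j, C i j = if i = j then 𝔡 - d i else M i j)
    (P : Matrix (Fin n) (Fin n) ℝ) (hP : P = (1 / 𝔡) • C)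
    (G : SimpleGraph (Fin n))
    (hG : ∀ i j, G.Adj i j ↔ i ≠ j ∧ 0 < M i j)
    (hconn : G.Connected)
    (hnotregbip : ¬ ((∀ i, d i = 𝔡) ∧
      ∃ f : Fin n → Bool, ∀ i j, M i j ≠ 0 → f i ≠ f j))
    (q : Fin n → ℝ) (hqL : L *ᵥ q = s) (hqsum : ∑ i, q i = 0) :
    HasSum (fun k : ℕ => (1 / 𝔡) • (P ^ k *ᵥ s)) q := by
  have hd_le : ∀ i, d i ≤ 𝔡 := fun i => h𝔡.2 ⟨i, rfl⟩
  have hDpos : 0 < 𝔡 := by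
    -- With at least two vertices, connectedness forces an edge.
    have : Nontrivial (Fin n) := Fin.nontrivial_iff_two_le.2 hn
    obtain ⟨j, hj⟩ := hconn.preconnected.exists_adj_of_nontrivial ⟨0, by omega⟩
    have h1 := ((hG _ _).1 hj).2
    have h2 := Finset.single_le_sum (fun k _ => hMnonneg ⟨0, by omega⟩ k) (Finset.mem_univ j)
    rw [← hd] at h2
    exact h1.trans_le (h2.trans (hd_le _))
  have hPherm : P.IsHermitian := by
    ext i j
    simp only [hP, conjTranspose_apply, Matrix.smul_apply, hC, star_trivial]
    by_cases hij : i = j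
    · subst hij
      rfl
    · rw [if_neg hij, if_neg (Ne.symm hij), hMsymm]
  have hLC : L = 𝔡 • (1 : Matrix (Fin n) (Fin n) ℝ) - C := by
    ext i j
    simp only [hL, hC, Matrix.sub_apply, Matrix.smul_apply, Matrix.one_apply, smul_eq_mul]
    split_ifs <;> ring
  have hs' : (1 / 𝔡) • s = q - P *ᵥ q := by
    rw [← hqL, hLC, hP, sub_mulVec, smul_mulVec, smul_mulVec, one_mulVec, smul_sub, smul_smul,
      one_div_mul_cancel hDpos.ne', one_smul]
  have hmain := hasSum_pow_mulVec_sub P hPherm q ?_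
  · simpa only [← hs', mulVec_smul] using hmain
  intro μ v hv0 hPv
  have hCv : C *ᵥ v = (𝔡 * μ) • v := by
    rw [← smul_smul, ← hPv, hP, smul_mulVec, smul_smul, mul_one_div_cancel hDpos.ne', one_smul]
  have hvpos : 0 < ∑ i, v i ^ 2 := by
    obtain ⟨i, hi⟩ := Function.ne_iff.1 hv0
    exact Finset.sum_pos' (fun i _ => sq_nonneg _) ⟨i, Finset.mem_univ i, pow_two_pos_of_ne_zero hi⟩
  have hterm_nonneg : ∀ (ε : ℝ) i j, 0 ≤ M i j * (v i + ε * v j) ^ 2 :=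
    fun ε i j => mul_nonneg (hMnonneg i j) (sq_nonneg _)
  have hrow_nonneg : ∀ (ε : ℝ) i, 0 ≤ ∑ j, M i j * (v i + ε * v j) ^ 2 :=
    fun ε i => Finset.sum_nonneg fun j _ => hterm_nonneg ε i j
  have hsum_nonneg : ∀ ε : ℝ, 0 ≤ ∑ i, ∑ j, M i j * (v i + ε * v j) ^ 2 :=
    fun ε => Finset.sum_nonneg fun i _ => hrow_nonneg ε i
  have hdef_nonneg : ∀ i, 0 ≤ (𝔡 - d i) * v i ^ 2 :=
    fun i => mul_nonneg (sub_nonneg.2 (hd_le i)) (sq_nonneg _)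
  have hdefsum_nonneg : 0 ≤ ∑ i, (𝔡 - d i) * v i ^ 2 :=
    Finset.sum_nonneg fun i _ => hdef_nonneg i
  have hedge : ∀ ε : ℝ, ∑ i, ∑ j, M i j * (v i + ε * v j) ^ 2 = 0 →
      ∀ i j, M i j ≠ 0 → v i + ε * v j = 0 := by
    intro ε h0 i j hij
    have h1 := (Finset.sum_eq_zero_iff_of_nonneg fun i _ => hrow_nonneg ε i).1 h0 i
      (Finset.mem_univ i)
    have h2 := (Finset.sum_eq_zero_iff_of_nonneg fun j _ => hterm_nonneg ε i j).1 h1 j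
      (Finset.mem_univ j)
    exact pow_eq_zero_iff two_ne_zero |>.1 ((mul_eq_zero.1 h2).resolve_left hij)
  have hQneg := quadratic_form_eigenvector M C hMsymm hMdiag d hd 𝔡 hC v μ (-1) hCv (by norm_num)
  have hQpos := quadratic_form_eigenvector M C hMsymm hMdiag d hd 𝔡 hC v μ 1 hCv (by norm_num)
  have hfac : 0 < 2 * 𝔡 * ∑ i, v i ^ 2 := by positivity
  have hle : μ ≤ 1 := by
    have := hsum_nonneg (-1)
    by_contra! hlt
    nlinarith
  have hge : -1 ≤ μ := by
    have := hsum_nonneg 1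
    by_contra! hlt
    nlinarith
  rcases hle.lt_or_eq with hlt | rfl
  · left
    refine abs_lt.2 ⟨hge.lt_of_ne ?_, hlt⟩
    rintro rfl
    have h1 : ∑ i, ∑ j, M i j * (v i + 1 * v j) ^ 2 = 0 := by
      have := hsum_nonneg 1
      nlinarith
    have h2 : ∑ i, (𝔡 - d i) * v i ^ 2 = 0 := by
      nlinarith
    have hopp : ∀ i j, M i j ≠ 0 → v i = -v j := fun i j hij => by
      have := hedge 1 h1 i j hij
      linarith
    have habs : ∀ i j, |v i| = |v j| := eq_of_adj_of_connected hconn (fun i => |v i|)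
      fun i j hij => by simp only [hopp i j ((hG i j).1 hij).2.ne', abs_neg]
    have hne : ∀ i, v i ≠ 0 := by
      intro i hi
      apply hv0
      ext j
      have := habs j i
      rw [hi, abs_zero, abs_eq_zero] at this
      exact this
    refine hnotregbip ⟨fun i => ?_, fun i => decide (0 < v i), fun i j hij => ?_⟩
    · have h3 := (Finset.sum_eq_zero_iff_of_nonneg fun i _ => hdef_nonneg i).1 h2 i
        (Finset.mem_univ i)
      have h4 := (mul_eq_zero.1 h3).resolve_right (pow_ne_zero 2 (hne i))
      linarith
    · have h3 := hopp i j hij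
      rcases lt_or_gt_of_ne (hne j) with h4 | h4
      · have h5 : 0 < v i := by linarith
        simp [h5, h4.le]
      · have h5 : v i ≤ 0 := by linarith
        simp [h4, h5]
  · right
    have h1 : ∑ i, ∑ j, M i j * (v i + -1 * v j) ^ 2 = 0 := by
      linarith
    have hconst : ∀ i j, v i = v j := eq_of_adj_of_connected hconn v fun i j hij => by
      have := hedge (-1) h1 i j ((hG i j).1 hij).2.ne'
      linarith
    have hcq : v ⬝ᵥ q = v ⟨0, by omega⟩ * ∑ i, q i := by
      rw [dotProduct, Finset.mul_sum]
      exact Finset.sum_congr rfl fun i _ => by rw [hconst i]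
    rw [hcq, hqsum, mul_zero]
end

section
/- Suppose the comparison graph G is connected and G is not regular bipartite, and let q be the unique vector with L *ᵥ q = s and ∑ i, q i = 0. Define the sequence of vectors q⁽⁰⁾ := (1/𝔡) • s and q⁽ᵏ⁾ := q⁽ᵏ⁻¹⁾ + (1/𝔡) • (P^k *ᵥ s) for k ≥ 1. Then q⁽ᵏ⁾ converges to q as k → ∞ (Proposition 4.2: the least squares rating is the limit point of the iterative process based on scores). -/
/-!
Since `C = 𝔡 • 1 - L`, one has `(1 / 𝔡) • s = q - P *ᵥ q`, so the partial sums telescope to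
`q⁽ᵏ⁾ = q - P ^ (k + 1) *ᵥ q`, and it remains to see that `P ^ k *ᵥ q` tends to zero.

The matrix `P` is symmetric, nonnegative and stochastic, so for `ε = ± 1` an eigenvector `v` with
eigenvalue `μ` satisfies `∑ i j, P i j * (v i - ε * v j) ^ 2 = 2 * (1 - ε * μ) * ∑ i, v i ^ 2`
(`dirichlet_form`). Hence `|μ| ≤ 1`. If `μ = 1`, connectedness makes `v` constant, hence orthogonal
to `q`. If `μ = -1`, then `v` changes sign along every edge and `P` has zero diagonal, which makes
the graph regular bipartite with the sign of `v` as the bipartition. So in an orthonormal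
eigenbasis of `P` all nonzero components of `q` belong to eigenvalues with `|μ| < 1`
(`tendsto_pow_mulVec`), and they decay geometrically.
-/

open Matrix Finset

/-- The Dirichlet form of a symmetric stochastic matrix (`ε = 1`) and its signless analogue
(`ε = -1`), evaluated at an eigenvector. -/
lemma dirichlet_form {n : ℕ} {P : Matrix (Fin n) (Fin n) ℝ} (hsymm : ∀ i j, P j i = P i j)
    (hrow : ∀ i, ∑ j, P i j = 1) {v : Fin n → ℝ} {μ : ℝ} (hv : P *ᵥ v = μ • v)
    {ε : ℝ} (hε : ε ^ 2 = 1) :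
    ∑ i, ∑ j, P i j * (v i - ε * v j) ^ 2 = 2 * (1 - ε * μ) * ∑ i, v i ^ 2 := by
  have h1 : ∑ i, ∑ j, P i j * v i ^ 2 = ∑ i, v i ^ 2 := by
    simp_rw [← Finset.sum_mul, hrow, one_mul]
  have h2 : ∑ i, ∑ j, P i j * v j ^ 2 = ∑ i, v i ^ 2 := by
    rw [Finset.sum_comm, ← h1]
    simp_rw [hsymm]
  have h3 : ∑ i, ∑ j, P i j * (v i * v j) = μ * ∑ i, v i ^ 2 := by
    rw [Finset.mul_sum]
    refine Finset.sum_congr rfl fun i _ => ?_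
    have h : ∑ j, P i j * v j = μ * v i := congrFun hv i
    calc ∑ j, P i j * (v i * v j) = v i * ∑ j, P i j * v j := by
          rw [Finset.mul_sum]
          exact Finset.sum_congr rfl fun j _ => by ring
      _ = μ * v i ^ 2 := by rw [h]; ring
  calc ∑ i, ∑ j, P i j * (v i - ε * v j) ^ 2
      = ∑ i, ∑ j, (P i j * v i ^ 2 + P i j * v j ^ 2 - 2 * ε * (P i j * (v i * v j))) := by
        refine Finset.sum_congr rfl fun i _ => Finset.sum_congr rfl fun j _ => ?_
        linear_combination P i j * v j ^ 2 * hε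
    _ = 2 * (1 - ε * μ) * ∑ i, v i ^ 2 := by
        simp_rw [Finset.sum_sub_distrib, Finset.sum_add_distrib, ← Finset.mul_sum]
        rw [h1, h2, h3]
        ring

/-- The equality case of `dirichlet_form`: an eigenvector for the eigenvalue `ε = ± 1` is
multiplied by `ε` along every positive entry of `P`. -/
lemma eigenvector_of_sign {n : ℕ} {P : Matrix (Fin n) (Fin n) ℝ} (hsymm : ∀ i j, P j i = P i j)
    (hrow : ∀ i, ∑ j, P i j = 1) (hnonneg : ∀ i j, 0 ≤ P i j) {v : Fin n → ℝ}
    {ε : ℝ} (hε : ε ^ 2 = 1) (hv : P *ᵥ v = ε • v) (i j : Fin n) (hij : P i j ≠ 0) :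
    v i = ε * v j := by
  have h := dirichlet_form hsymm hrow hv hε
  have h0 : 2 * (1 - ε * ε) * ∑ i, v i ^ 2 = 0 := by
    linear_combination (-2 * ∑ i, v i ^ 2) * hε
  rw [h0] at h
  have hterm : ∀ i j, 0 ≤ P i j * (v i - ε * v j) ^ 2 := fun i j =>
    mul_nonneg (hnonneg i j) (sq_nonneg _)
  have hi := (Finset.sum_eq_zero_iff_of_nonneg
    fun i _ => Finset.sum_nonneg fun j _ => hterm i j).1 h i (Finset.mem_univ i)
  have hj := (Finset.sum_eq_zero_iff_of_nonneg fun j _ => hterm i j).1 hi j (Finset.mem_univ j)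
  have := (mul_eq_zero.1 hj).resolve_left hij
  exact sub_eq_zero.1 (pow_eq_zero_iff (two_ne_zero) |>.1 this)

lemma abs_eigenvalue_le_one {n : ℕ} {P : Matrix (Fin n) (Fin n) ℝ}
    (hsymm : ∀ i j, P j i = P i j) (hrow : ∀ i, ∑ j, P i j = 1) (hnonneg : ∀ i j, 0 ≤ P i j)
    {v : Fin n → ℝ} {μ : ℝ} (hv : P *ᵥ v = μ • v) (hv0 : v ≠ 0) : |μ| ≤ 1 := by
  have hpos : 0 < ∑ i, v i ^ 2 := by
    obtain ⟨i, hi⟩ := Function.ne_iff.1 hv0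
    exact Finset.sum_pos' (fun i _ => sq_nonneg _) ⟨i, Finset.mem_univ i, sq_pos_of_ne_zero hi⟩
  have key : ∀ ε : ℝ, ε ^ 2 = 1 → 0 ≤ 1 - ε * μ := fun ε hε => by
    have h := dirichlet_form hsymm hrow hv hε
    have h' : 0 ≤ 2 * (1 - ε * μ) * ∑ i, v i ^ 2 := by
      rw [← h]
      exact Finset.sum_nonneg fun i _ => Finset.sum_nonneg fun j _ =>
        mul_nonneg (hnonneg i j) (sq_nonneg _)
    linarith [nonneg_of_mul_nonneg_left h' hpos]
  have h1 := key 1 (by norm_num)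
  have h2 := key (-1) (by norm_num)
  rw [abs_le]
  constructor <;> linarith

/-- Powers of a symmetric matrix kill, in the limit, every vector that is orthogonal to all
eigenvectors whose eigenvalue has absolute value at least one. -/
lemma tendsto_pow_mulVec {n : ℕ} {P : Matrix (Fin n) (Fin n) ℝ} (hP : P.IsHermitian)
    (q : Fin n → ℝ)
    (h : ∀ (v : Fin n → ℝ) (μ : ℝ), v ≠ 0 → P *ᵥ v = μ • v → |μ| < 1 ∨ ∑ i, q i * v i = 0) :
    Filter.Tendsto (fun k : ℕ => P ^ k *ᵥ q) Filter.atTop (nhds 0) := by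
  let b := hP.eigenvectorBasis
  let v : Fin n → Fin n → ℝ := fun j => (b j).ofLp
  let c : Fin n → ℝ := fun j => ∑ i, q i * v j i
  have hv : ∀ j, P *ᵥ v j = hP.eigenvalues j • v j := fun j => hP.mulVec_eigenvectorBasis j
  have hv0 : ∀ j, v j ≠ 0 := fun j hj =>
    b.orthonormal.ne_zero j (by ext i; exact congrFun hj i)
  have hq : q = ∑ j, c j • v j := by
    have hsum := congrArg WithLp.ofLp (b.sum_repr' (WithLp.toLp 2 q))
    rw [WithLp.ofLp_sum] at hsum
    rw [← show _ = q from hsum]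
    refine Finset.sum_congr rfl fun j _ => ?_
    simp [c, v, PiLp.inner_apply]
  have hpow : ∀ (k : ℕ) (j : Fin n), P ^ k *ᵥ v j = hP.eigenvalues j ^ k • v j := by
    intro k j
    induction k with
    | zero => simp
    | succ k ih => rw [pow_succ, ← mulVec_mulVec, hv, mulVec_smul, ih, smul_smul, pow_succ']
  have hexp : ∀ k : ℕ, P ^ k *ᵥ q = ∑ j, (c j * hP.eigenvalues j ^ k) • v j := by
    intro k
    conv_lhs => rw [hq]
    rw [mulVec_sum]
    exact Finset.sum_congr rfl fun j _ => by rw [mulVec_smul, hpow, smul_smul]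
  simp_rw [hexp]
  rw [← Finset.sum_const_zero (ι := Fin n) (s := Finset.univ)]
  refine tendsto_finsetSum _ fun j _ => ?_
  rcases h (v j) _ (hv0 j) (hv j) with hlt | h0
  · simpa using ((tendsto_pow_atTop_nhds_zero_of_abs_lt_one hlt).const_mul (c j)).smul_const (v j)
  · have : c j = 0 := h0
    simp [this]

/-- Proposition 4.2: if the comparison graph is connected and not regular bipartite, then the
iterative process `q⁽⁰⁾ = (1/𝔡)•s`, `q⁽ᵏ⁾ = q⁽ᵏ⁻¹⁾ + (1/𝔡)•(P^k *ᵥ s)` converges to the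
least squares rating `q`. -/
theorem least_squares_iterative (n : ℕ) (hn : 2 ≤ n)
    (M A : Matrix (Fin n) (Fin n) ℝ)
    (hMsymm : ∀ i j, M j i = M i j)
    (hMnonneg : ∀ i j, 0 ≤ M i j)
    (hMdiag : ∀ i, M i i = 0)
    (hAskew : ∀ i j, A j i = -A i j)
    (hAM : ∀ i j, M i j = 0 → A i j = 0)
    (e : Fin n → ℝ) (he : ∀ i, e i = 1)
    (s : Fin n → ℝ) (hs : s = A *ᵥ e)
    (d : Fin n → ℝ) (hd : ∀ i, d i = ∑ j, M i j)
    (L : Matrix (Fin n) (Fin n) ℝ)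
    (hL : ∀ i j, L i j = if i = j then d i else -M i j)
    (𝔡 : ℝ) (h𝔡 : IsGreatest (Set.range d) 𝔡)
    (C : Matrix (Fin n) (Fin n) ℝ)
    (hC : ∀ i j, C i j = if i = j then 𝔡 - d i else M i j)
    (P : Matrix (Fin n) (Fin n) ℝ) (hP : P = (1 / 𝔡) • C)
    (G : SimpleGraph (Fin n))
    (hG : ∀ i j, G.Adj i j ↔ i ≠ j ∧ 0 < M i j)
    (hconn : G.Connected)
    (hnotregbip : ¬ ((∀ i, d i = 𝔡) ∧
      ∃ f : Fin n → Bool, ∀ i j, M i j ≠ 0 → f i ≠ f j))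
    (q : Fin n → ℝ) (hqL : L *ᵥ q = s) (hqsum : ∑ i, q i = 0)
    (qs : ℕ → Fin n → ℝ)
    (hqs0 : qs 0 = (1 / 𝔡) • s)
    (hqsk : ∀ k : ℕ, qs (k + 1) = qs k + (1 / 𝔡) • (P ^ (k + 1) *ᵥ s)) :
    Filter.Tendsto qs Filter.atTop (nhds q) := by
  have hdle : ∀ i, d i ≤ 𝔡 := fun i => h𝔡.2 ⟨i, rfl⟩
  have h𝔡pos : 0 < 𝔡 := by
    have : Nontrivial (Fin n) := Fin.nontrivial_iff_two_le.2 hn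
    let i₀ : Fin n := ⟨0, by omega⟩
    obtain ⟨j, hj⟩ := hconn.preconnected.exists_adj_of_nontrivial i₀
    calc 0 < M i₀ j := ((hG _ _).1 hj).2
      _ ≤ d i₀ := by
        rw [hd]
        exact Finset.single_le_sum (fun j _ => hMnonneg i₀ j) (Finset.mem_univ j)
      _ ≤ 𝔡 := hdle i₀
  have hCL : C = 𝔡 • (1 : Matrix (Fin n) (Fin n) ℝ) - L := by
    ext i j
    rw [hC, Matrix.sub_apply, Matrix.smul_apply, hL, Matrix.one_apply]
    split_ifs <;> simp
  have hPij : ∀ i j, P i j = (1 / 𝔡) * C i j := fun i j => by rw [hP]; rfl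
  have hnonneg : ∀ i j, 0 ≤ P i j := fun i j => by
    rw [hPij, hC]
    refine mul_nonneg (by positivity) ?_
    split_ifs
    · exact sub_nonneg.2 (hdle i)
    · exact hMnonneg i j
  have hsymm : ∀ i j, P j i = P i j := fun i j => by
    rw [hPij, hPij, hC, hC]
    rcases eq_or_ne i j with rfl | hij
    · rfl
    · rw [if_neg hij, if_neg hij.symm, hMsymm]
  have hrow : ∀ i, ∑ j, P i j = 1 := fun i => by
    have hCi : ∀ j, C i j = M i j + if i = j then 𝔡 - d i else 0 := fun j => by
      rw [hC]
      rcases eq_or_ne i j with rfl | hij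
      · simp [hMdiag]
      · simp [hij]
    simp_rw [hPij, hCi]
    rw [← Finset.mul_sum, Finset.sum_add_distrib, ← hd, Finset.sum_ite_eq]
    simp [h𝔡pos.ne']
  have hMP : ∀ i j, M i j ≠ 0 → P i j ≠ 0 := fun i j hij => by
    have hne : i ≠ j := fun h => hij (by rw [h, hMdiag])
    rw [hPij, hC, if_neg hne]
    exact mul_ne_zero (by positivity) hij
  -- A function invariant along the edges is constant, by connectedness.
  have hconst : ∀ w : Fin n → ℝ, (∀ i j, M i j ≠ 0 → w i = w j) → ∀ i j, w i = w j := by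
    intro w hw i j
    obtain ⟨p⟩ := hconn.preconnected i j
    induction p with
    | nil => rfl
    | cons hadj _ ih => exact (hw _ _ ((hG _ _).1 hadj).2.ne').trans ih
  have hlim : Filter.Tendsto (fun k : ℕ => P ^ k *ᵥ q) Filter.atTop (nhds 0) := by
    refine tendsto_pow_mulVec (IsHermitian.ext fun i j => by simpa using hsymm i j) q ?_
    intro v μ hv0 hv
    rcases (abs_eigenvalue_le_one hsymm hrow hnonneg hv hv0).lt_or_eq with hlt | heq
    · exact Or.inl hlt
    right
    rcases eq_or_eq_neg_of_abs_eq heq with rfl | rfl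
    · have hvc := hconst v fun i j hij => by
        simpa using eigenvector_of_sign hsymm hrow hnonneg (by norm_num) hv i j (hMP i j hij)
      rw [Finset.sum_congr rfl fun i _ => by rw [hvc i ⟨0, by omega⟩], ← Finset.sum_mul, hqsum,
        zero_mul]
    · exfalso
      have hflip : ∀ i j, P i j ≠ 0 → v i = -v j := fun i j hij => by
        simpa using eigenvector_of_sign hsymm hrow hnonneg (by norm_num) hv i j hij
      have hvabs := hconst (fun i => |v i|) fun i j hij => by
        simp only [hflip i j (hMP i j hij), abs_neg]
      have hvne : ∀ i, v i ≠ 0 := fun i hi => hv0 <| funext fun j => by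
        have := hvabs j i
        simpa [hi] using this
      refine hnotregbip ⟨fun i => ?_, fun i => decide (0 < v i), fun i j hij => ?_⟩
      · by_contra hdi
        have hPii : P i i ≠ 0 := by
          rw [hPij, hC, if_pos rfl]
          exact mul_ne_zero (by positivity) (sub_ne_zero.2 (Ne.symm hdi))
        exact hvne i (by linarith [hflip i i hPii])
      · have h := hflip i j (hMP i j hij)
        intro hdec
        have hiff : 0 < v i ↔ 0 < v j := by simpa using hdec
        rcases lt_or_gt_of_ne (hvne i) with hneg | hpos
        · linarith [hiff.2 (by linarith)]
        · linarith [hiff.1 hpos]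
  have hs𝔡 : (1 / 𝔡) • s = q - P *ᵥ q := by
    rw [hP, hCL, smul_mulVec, sub_mulVec, smul_mulVec, one_mulVec, hqL, smul_sub, smul_smul,
      one_div_mul_cancel h𝔡pos.ne', one_smul, sub_sub_cancel]
  have htel : ∀ k, qs k = q - P ^ (k + 1) *ᵥ q := by
    intro k
    induction k with
    | zero => rw [hqs0, hs𝔡, zero_add, pow_one]
    | succ k ih =>
      rw [hqsk, ih, ← mulVec_smul, hs𝔡, mulVec_sub, mulVec_mulVec, ← pow_succ,
        sub_add_sub_cancel]
  rw [show qs = fun k => q - P ^ (k + 1) *ᵥ q from funext htel]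
  simpa using (hlim.comp (Filter.tendsto_add_atTop_nat 1)).const_sub q
end

section
/- Let m > 0 be a real number and let ε > 0 satisfy ε·μ < 1 for every eigenvalue μ of L. Then I + ε•L is invertible and the generalized row sum rating x := (I + ε•L)⁻¹ *ᵥ ((1 + ε·m·n) • s) is the sum of the convergent series ∑_{k=0}^∞ (-ε)^k • (L^k *ᵥ ((1 + ε·m·n) • s)); formally, HasSum (fun k : ℕ => (-ε)^k • (L^k *ᵥ ((1 + ε·m·n) • s))) x (Proposition 4.1: decomposition of the generalized row sum method by powers of ε). -/
/-!
The quadratic form of `L` is `½ ∑ M i j (v i - v j)²`, so `L` is positive semidefinite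
(`laplacian_posSemidef`); hence
`1 + ε L` is positive definite and every eigenvalue satisfies `0 ≤ ε μ < 1`. On an eigenvector the
series is the geometric series with ratio `-ε μ`, whose sum `(1 + ε μ)⁻¹` is the action of
`(1 + ε L)⁻¹` (`hasSum_neumann_of_eigenvector`). By the spectral theorem every vector is a finite combination of eigenvectors, and
both sides are linear in the vector.
-/

open Matrix Finset

theorem laplacian_posSemidef {n : ℕ} (M L : Matrix (Fin n) (Fin n) ℝ)
    (hMsymm : ∀ i j, M j i = M i j) (hMnonneg : ∀ i j, 0 ≤ M i j) (hMdiag : ∀ i, M i i = 0)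
    (hL : ∀ i j, L i j = if i = j then ∑ k, M i k else -M i j) : L.PosSemidef := by
  refine PosSemidef.of_dotProduct_mulVec_nonneg ?_ fun v => ?_
  · ext i j
    simp only [conjTranspose_apply, star_trivial, hL]
    by_cases h : i = j
    · subst h; rfl
    · rw [if_neg h, if_neg (Ne.symm h), hMsymm]
  · have hLv : ∀ i, (L *ᵥ v) i = ∑ j, M i j * (v i - v j) := by
      intro i
      have hLij : ∀ j, L i j * v j = (if i = j then (∑ k, M i k) * v i else 0) - M i j * v j := by
        intro j
        rw [hL]
        by_cases h : i = j
        · subst h; simp [hMdiag]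
        · simp [h]
      simp only [mulVec, dotProduct, hLij, Finset.sum_sub_distrib, Finset.sum_ite_eq,
        Finset.mem_univ, if_true, mul_sub, Finset.sum_mul]
    have hform : star v ⬝ᵥ (L *ᵥ v) = ∑ i, ∑ j, M i j * (v i * (v i - v j)) := by
      simp only [dotProduct, star_trivial, hLv, Finset.mul_sum]
      exact Finset.sum_congr rfl fun i _ => Finset.sum_congr rfl fun j _ => by ring
    have hswap : ∑ i, ∑ j, M i j * (v i * (v i - v j)) =
        ∑ i, ∑ j, M i j * (v j * (v j - v i)) := by
      rw [Finset.sum_comm]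
      exact Finset.sum_congr rfl fun i _ => Finset.sum_congr rfl fun j _ => by rw [hMsymm]
    have hsq : (∑ i, ∑ j, M i j * (v i * (v i - v j))) +
        ∑ i, ∑ j, M i j * (v j * (v j - v i)) = ∑ i, ∑ j, M i j * (v i - v j) ^ 2 := by
      simp only [← Finset.sum_add_distrib]
      exact Finset.sum_congr rfl fun i _ => Finset.sum_congr rfl fun j _ => by ring
    have hnonneg : 0 ≤ ∑ i, ∑ j, M i j * (v i - v j) ^ 2 :=
      Finset.sum_nonneg fun i _ => Finset.sum_nonneg fun j _ =>
        mul_nonneg (hMnonneg i j) (sq_nonneg _)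
    linarith

theorem hasSum_neumann_of_eigenvector {n : ℕ} (L : Matrix (Fin n) (Fin n) ℝ) (ε μ : ℝ)
    (hunit : IsUnit ((1 : Matrix (Fin n) (Fin n) ℝ) + ε • L)) (h0 : 0 ≤ ε * μ) (h1 : ε * μ < 1)
    (v : Fin n → ℝ) (hv : L *ᵥ v = μ • v) :
    HasSum (fun k : ℕ => (-ε) ^ k • (L ^ k *ᵥ v))
      (((1 : Matrix (Fin n) (Fin n) ℝ) + ε • L)⁻¹ *ᵥ v) := by
  have hpow : ∀ k : ℕ, L ^ k *ᵥ v = μ ^ k • v := by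
    intro k
    induction k with
    | zero => simp
    | succ k ih => rw [pow_succ, ← mulVec_mulVec, hv, mulVec_smul, ih, smul_smul, pow_succ']
  have hmul : ((1 : Matrix (Fin n) (Fin n) ℝ) + ε • L) *ᵥ v = (1 + ε * μ) • v := by
    rw [add_mulVec, one_mulVec, smul_mulVec, hv, smul_smul, add_smul, one_smul]
  have hinv : ((1 : Matrix (Fin n) (Fin n) ℝ) + ε • L)⁻¹ *ᵥ v = (1 + ε * μ)⁻¹ • v := by
    have hne : 1 + ε * μ ≠ 0 := by positivity
    have hdet := (Matrix.isUnit_iff_isUnit_det _).mp hunit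
    have hv' : v = (1 + ε * μ)⁻¹ • (((1 : Matrix (Fin n) (Fin n) ℝ) + ε • L) *ᵥ v) := by
      rw [hmul, smul_smul, inv_mul_cancel₀ hne, one_smul]
    conv_lhs => rw [hv']
    rw [mulVec_smul, mulVec_mulVec, Matrix.nonsing_inv_mul _ hdet, one_mulVec]
  have hgeom : HasSum (fun k : ℕ => (-(ε * μ)) ^ k) (1 + ε * μ)⁻¹ := by
    have := hasSum_geometric_of_abs_lt_one (r := -(ε * μ)) (by rwa [abs_neg, abs_of_nonneg h0])
    rwa [sub_neg_eq_add] at this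
  rw [hinv]
  convert hgeom.smul_const v using 2 with k
  rw [hpow, smul_smul, ← mul_pow, neg_mul]

/-- Proposition 4.1: for `ε` small enough (ε·μ < 1 for every Laplacian eigenvalue μ),
the generalized row sum rating decomposes as the convergent series
`∑_k (-ε)^k • (L^k *ᵥ ((1 + ε·m·n) • s))`. -/
theorem generalized_row_sum_decomposition (n : ℕ) (hn : 2 ≤ n)
    (M A : Matrix (Fin n) (Fin n) ℝ)
    (hMsymm : ∀ i j, M j i = M i j)
    (hMnonneg : ∀ i j, 0 ≤ M i j)
    (hMdiag : ∀ i, M i i = 0)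
    (hAskew : ∀ i j, A j i = -A i j)
    (hAM : ∀ i j, M i j = 0 → A i j = 0)
    (e : Fin n → ℝ) (he : ∀ i, e i = 1)
    (s : Fin n → ℝ) (hs : s = A *ᵥ e)
    (d : Fin n → ℝ) (hd : ∀ i, d i = ∑ j, M i j)
    (L : Matrix (Fin n) (Fin n) ℝ)
    (hL : ∀ i j, L i j = if i = j then d i else -M i j)
    (m : ℝ) (hm : 0 < m)
    (ε : ℝ) (hε : 0 < ε)
    (hεμ : ∀ μ : ℝ, (∃ v : Fin n → ℝ, v ≠ 0 ∧ L *ᵥ v = μ • v) → ε * μ < 1) :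
    IsUnit ((1 : Matrix (Fin n) (Fin n) ℝ) + ε • L) ∧
    HasSum (fun k : ℕ => (-ε) ^ k • (L ^ k *ᵥ ((1 + ε * m * n) • s)))
      (((1 : Matrix (Fin n) (Fin n) ℝ) + ε • L)⁻¹ *ᵥ ((1 + ε * m * n) • s)) := by
  have hpsd : L.PosSemidef := laplacian_posSemidef M L hMsymm hMnonneg hMdiag fun i j => by
    rw [hL, hd]
  have hunit : IsUnit ((1 : Matrix (Fin n) (Fin n) ℝ) + ε • L) :=
    (PosDef.one.add_posSemidef (hpsd.smul hε.le)).isUnit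
  refine ⟨hunit, ?_⟩
  generalize (1 + ε * m * n) • s = w
  let b := hpsd.1.eigenvectorBasis
  have hb : ∀ i, HasSum (fun k : ℕ => (-ε) ^ k • (L ^ k *ᵥ ⇑(b i)))
      (((1 : Matrix (Fin n) (Fin n) ℝ) + ε • L)⁻¹ *ᵥ ⇑(b i)) := by
    intro i
    have hLb : L *ᵥ ⇑(b i) = hpsd.1.eigenvalues i • ⇑(b i) := hpsd.1.mulVec_eigenvectorBasis i
    refine hasSum_neumann_of_eigenvector L ε (hpsd.1.eigenvalues i) hunit
      (mul_nonneg hε.le (hpsd.eigenvalues_nonneg i)) (hεμ _ ⟨_, fun h => ?_, hLb⟩) _ hLb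
    exact b.toBasis.ne_zero i (by ext j; simpa using congrFun h j)
  have hw : w = ∑ i, b.repr (WithLp.toLp 2 w) i • ⇑(b i) := by
    have := congrArg WithLp.ofLp (b.sum_repr (WithLp.toLp 2 w))
    simpa using this.symm
  have hsum := hasSum_sum (s := Finset.univ) fun i _ =>
    (hb i).const_smul (b.repr (WithLp.toLp 2 w) i)
  rw [hw]
  convert hsum using 1
  · ext1 k
    simp only [mulVec_sum, mulVec_smul, Finset.smul_sum]
    exact Finset.sum_congr rfl fun i _ => smul_comm _ _ _
  · simp only [mulVec_sum, mulVec_smul]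
end

section
/- If the comparison graph G is connected, then the matrix L + (1/n)•J is invertible (Lemma 3.2, nonsingularity part). -/
/-!
It suffices that `L + (1/n) • J` has trivial kernel. Let `v` be in the kernel; row `i` reads
`∑ j, M i j * (v i - v j) + (1/n) * ∑ j, v j = 0`. Summing over `i`, the Laplacian part vanishes
because `M` is symmetric, so `∑ j, v j = 0` and hence `L v = 0`. Then the Dirichlet form
`∑ i, ∑ j, M i j * (v i - v j) ^ 2 = 2 * ⟨v, L v⟩` vanishes, so `v` takes equal values at adjacent
vertices; connectedness makes `v` constant, and having sum zero it is zero.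
-/

open Matrix Finset

/-- The weighted Laplacian annihilates constants on the left. -/
lemma sum_sum_mul_sub_eq_zero {n : ℕ} (M : Matrix (Fin n) (Fin n) ℝ)
    (hM : ∀ i j, M j i = M i j) (v : Fin n → ℝ) :
    ∑ i, ∑ j, M i j * (v i - v j) = 0 := by
  have h : ∑ i, ∑ j, M i j * (v i - v j) = ∑ i, ∑ j, -(M i j * (v i - v j)) := by
    rw [Finset.sum_comm]
    refine Finset.sum_congr rfl fun i _ => Finset.sum_congr rfl fun j _ => ?_
    rw [hM]
    ring
  simp only [Finset.sum_neg_distrib] at h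
  linarith

lemma sum_sum_mul_sub_sq {n : ℕ} (M : Matrix (Fin n) (Fin n) ℝ)
    (hM : ∀ i j, M j i = M i j) (v : Fin n → ℝ) :
    ∑ i, ∑ j, M i j * (v i - v j) ^ 2 = 2 * ∑ i, v i * ∑ j, M i j * (v i - v j) := by
  have h : ∑ i, ∑ j, M i j * (v i - v j) * v i = ∑ i, ∑ j, -(M i j * (v i - v j) * v j) := by
    rw [Finset.sum_comm]
    refine Finset.sum_congr rfl fun i _ => Finset.sum_congr rfl fun j _ => ?_
    rw [hM]
    ring
  have h2 : ∑ i, v i * ∑ j, M i j * (v i - v j) = ∑ i, ∑ j, M i j * (v i - v j) * v i := by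
    simp only [Finset.mul_sum]
    exact Finset.sum_congr rfl fun i _ => Finset.sum_congr rfl fun j _ => by ring
  rw [h2, two_mul]
  nth_rewrite 2 [h]
  simp only [← Finset.sum_add_distrib]
  exact Finset.sum_congr rfl fun i _ => Finset.sum_congr rfl fun j _ => by ring

/-- Lemma 3.2 (nonsingularity part): if the comparison graph is connected, then
`L + (1/n)•J` is invertible. -/
theorem laplacian_plus_J_invertible (n : ℕ) (hn : 2 ≤ n)
    (M : Matrix (Fin n) (Fin n) ℝ)
    (hMsymm : ∀ i j, M j i = M i j)
    (hMnonneg : ∀ i j, 0 ≤ M i j)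
    (hMdiag : ∀ i, M i i = 0)
    (J : Matrix (Fin n) (Fin n) ℝ) (hJ : ∀ i j, J i j = 1)
    (d : Fin n → ℝ) (hd : ∀ i, d i = ∑ j, M i j)
    (L : Matrix (Fin n) (Fin n) ℝ)
    (hL : ∀ i j, L i j = if i = j then d i else -M i j)
    (G : SimpleGraph (Fin n))
    (hG : ∀ i j, G.Adj i j ↔ i ≠ j ∧ 0 < M i j)
    (hconn : G.Connected) :
    IsUnit (L + (1 / (n : ℝ)) • J) := by
  have hn0 : (n : ℝ) ≠ 0 := by
    have : n ≠ 0 := by omega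
    exact_mod_cast this
  rw [← Matrix.mulVec_injective_iff_isUnit, ← Matrix.coe_mulVecLin,
    injective_iff_map_eq_zero]
  intro v hv
  have hrow : ∀ i, ∑ j, M i j * (v i - v j) + (1 / (n : ℝ)) * ∑ j, v j = 0 := by
    intro i
    have hi := congrFun hv i
    simp only [Matrix.mulVecLin_apply, Matrix.mulVec, dotProduct, Matrix.add_apply,
      Matrix.smul_apply, hJ, smul_eq_mul, mul_one, Pi.zero_apply, add_mul,
      Finset.sum_add_distrib, ← Finset.mul_sum] at hi
    rw [← hi]
    congr 1
    -- The zero diagonal of `M` lets the two cases of `hL` merge into one formula.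
    have hterm : ∀ j, L i j * v j = (if i = j then d i * v j else 0) - M i j * v j := by
      intro j
      rw [hL]
      split_ifs with h
      · subst h
        rw [hMdiag]
        ring
      · ring
    simp only [hterm, Finset.sum_sub_distrib, Finset.sum_ite_eq, Finset.mem_univ, if_true,
      hd, Finset.sum_mul, mul_sub]
  have hsum : ∑ j, v j = 0 := by
    have h := Finset.sum_congr (rfl : (Finset.univ : Finset (Fin n)) = _) fun i _ => hrow i
    rw [Finset.sum_add_distrib, sum_sum_mul_sub_eq_zero M hMsymm v] at h
    simpa [hn0] using h
  have hLv : ∀ i, ∑ j, M i j * (v i - v j) = 0 := by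
    intro i
    simpa [hsum] using hrow i
  have hform : ∑ i, ∑ j, M i j * (v i - v j) ^ 2 = 0 := by
    rw [sum_sum_mul_sub_sq M hMsymm v]
    simp [hLv]
  have hnn : ∀ i j, 0 ≤ M i j * (v i - v j) ^ 2 := fun i j =>
    mul_nonneg (hMnonneg i j) (sq_nonneg _)
  have hadj : ∀ i j, G.Adj i j → v i = v j := by
    intro i j hij
    have h1 := (Finset.sum_eq_zero_iff_of_nonneg
      (fun i _ => Finset.sum_nonneg fun j _ => hnn i j)).1 hform i (Finset.mem_univ i)
    have h2 := (Finset.sum_eq_zero_iff_of_nonneg (fun j _ => hnn i j)).1 h1 j (Finset.mem_univ j)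
    have h3 := (mul_eq_zero.1 h2).resolve_left ((hG i j).1 hij).2.ne'
    exact sub_eq_zero.1 (pow_eq_zero_iff two_ne_zero |>.1 h3)
  have hconst : ∀ i j, v i = v j := by
    intro i j
    obtain ⟨w⟩ := hconn.preconnected i j
    induction w with
    | nil => rfl
    | cons h _ ih => exact (hadj _ _ h).trans ih
  funext i
  have h : ∑ j, v j = n * v i := by
    rw [Finset.sum_congr rfl fun j _ => hconst j i]
    simp
  rw [hsum] at h
  exact (mul_eq_zero.1 h.symm).resolve_left hn0
end

section
/- Suppose the comparison graph G is connected, and let X := (L + (1/n)•J)⁻¹ - (1/n)•J. Then X is the Moore–Penrose generalized inverse of L, i.e., L * X * L = L, X * L * X = X, (L * X)ᵀ = L * X, and (X * L)ᵀ = X * L (Lemma 3.2: [L + (1/n)J]⁻¹ = L⁺ + (1/n)J). -/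
open Matrix Finset

/-!
Put `P = (1/n)J` and `A = L + P`. The matrix `P` is an idempotent with `L P = P L = 0`, because the
rows and columns of `L` sum to zero. If `A v = 0`, multiplying by `P` gives `P v = 0`, hence
`L v = 0`. The Laplacian quadratic form `∑ M i j (v i - v j)²` then vanishes, so `v` is constant on
the connected graph (`eq_of_laplacian_kernel`), and `P v = 0` makes that constant zero. Thus `A` is
invertible, and purely algebraically (`moore_penrose_of_idempotent`) `X = A⁻¹ - P` satisfies
`L X = X L = 1 - P`, from which the four Penrose equations follow.
-/

/-- The Penrose equations for `(L + P)⁻¹ - P`, where `P` is a symmetric idempotent annihilating `L`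
on both sides. -/
lemma moore_penrose_of_idempotent {n : ℕ} (L P X : Matrix (Fin n) (Fin n) ℝ)
    (hPP : P * P = P) (hLP : L * P = 0) (hPL : P * L = 0) (hPt : Pᵀ = P)
    (hA : IsUnit (L + P).det) (hX : X = (L + P)⁻¹ - P) :
    L * X * L = L ∧ X * L * X = X ∧ (L * X)ᵀ = L * X ∧ (X * L)ᵀ = X * L := by
  have hAP : (L + P) * P = P := by rw [add_mul, hLP, hPP, zero_add]
  have hPA : P * (L + P) = P := by rw [mul_add, hPL, hPP, zero_add]
  have hIP : (L + P)⁻¹ * P = P := by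
    calc (L + P)⁻¹ * P = (L + P)⁻¹ * ((L + P) * P) := by rw [hAP]
      _ = P := Matrix.nonsing_inv_mul_cancel_left _ _ hA
  have hPI : P * (L + P)⁻¹ = P := by
    calc P * (L + P)⁻¹ = P * (L + P) * (L + P)⁻¹ := by rw [hPA]
      _ = P := Matrix.mul_nonsing_inv_cancel_right _ _ hA
  have hPX : P * X = 0 := by rw [hX, mul_sub, hPI, hPP, sub_self]
  have hXP : X * P = 0 := by rw [hX, sub_mul, hIP, hPP, sub_self]
  have hLX : L * X = 1 - P := by
    have h : (L + P) * X = 1 - P := by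
      rw [hX, mul_sub, Matrix.mul_nonsing_inv _ hA, hAP]
    rwa [add_mul, hPX, add_zero] at h
  have hXL : X * L = 1 - P := by
    have h : X * (L + P) = 1 - P := by
      rw [hX, sub_mul, Matrix.nonsing_inv_mul _ hA, hPA]
    rwa [mul_add, hXP, add_zero] at h
  refine ⟨?_, ?_, ?_, ?_⟩
  · rw [hLX, sub_mul, hPL, one_mul, sub_zero]
  · rw [hXL, sub_mul, hPX, one_mul, sub_zero]
  · rw [hLX, transpose_sub, transpose_one, hPt]
  · rw [hXL, transpose_sub, transpose_one, hPt]

/-- A vector in the kernel of the weighted Laplacian of a connected graph is constant. -/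
lemma eq_of_laplacian_kernel {n : ℕ} (M : Matrix (Fin n) (Fin n) ℝ)
    (hMsymm : ∀ i j, M j i = M i j) (hMnonneg : ∀ i j, 0 ≤ M i j)
    (G : SimpleGraph (Fin n)) (hG : ∀ i j, G.Adj i j → 0 < M i j) (hconn : G.Connected)
    (v : Fin n → ℝ) (hv : ∀ i, ∑ j, M i j * (v i - v j) = 0) (i j : Fin n) : v i = v j := by
  have h1 : ∑ i, ∑ j, v i * (M i j * (v i - v j)) = 0 := by
    simp only [← Finset.mul_sum, hv, mul_zero, Finset.sum_const_zero]
  have h2 : ∑ i, ∑ j, v j * (M j i * (v j - v i)) = 0 := by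
    rw [Finset.sum_comm]
    exact h1
  have hquad : ∑ i, ∑ j, M i j * (v i - v j) ^ 2 = 0 := by
    calc ∑ i, ∑ j, M i j * (v i - v j) ^ 2
        = ∑ i, ∑ j, v i * (M i j * (v i - v j)) + ∑ i, ∑ j, v j * (M j i * (v j - v i)) := by
          simp only [← Finset.sum_add_distrib]
          refine Finset.sum_congr rfl fun a _ => Finset.sum_congr rfl fun b _ => ?_
          rw [hMsymm a b]
          ring
      _ = 0 := by rw [h1, h2, add_zero]
  have hnn : ∀ a b, 0 ≤ M a b * (v a - v b) ^ 2 :=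
    fun a b => mul_nonneg (hMnonneg a b) (sq_nonneg _)
  have hterm : ∀ a b, M a b * (v a - v b) ^ 2 = 0 := fun a b => by
    have h := (Finset.sum_eq_zero_iff_of_nonneg
      (fun a _ => Finset.sum_nonneg fun b _ => hnn a b)).1 hquad a (Finset.mem_univ a)
    exact (Finset.sum_eq_zero_iff_of_nonneg (fun b _ => hnn a b)).1 h b (Finset.mem_univ b)
  obtain ⟨w⟩ := hconn.preconnected i j
  induction w with
  | nil => rfl
  | @cons a b c hab _ ih =>
    refine Eq.trans ?_ ih
    have h := (mul_eq_zero.1 (hterm a b)).resolve_left (hG a b hab).ne'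
    exact sub_eq_zero.1 (pow_eq_zero_iff two_ne_zero |>.1 h)

/-- Lemma 3.2: `[L + (1/n)J]⁻¹ - (1/n)J` is the Moore–Penrose generalized inverse of `L`. -/
theorem laplacian_moore_penrose (n : ℕ) (hn : 2 ≤ n)
    (M : Matrix (Fin n) (Fin n) ℝ)
    (hMsymm : ∀ i j, M j i = M i j)
    (hMnonneg : ∀ i j, 0 ≤ M i j)
    (hMdiag : ∀ i, M i i = 0)
    (J : Matrix (Fin n) (Fin n) ℝ) (hJ : ∀ i j, J i j = 1)
    (d : Fin n → ℝ) (hd : ∀ i, d i = ∑ j, M i j)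
    (L : Matrix (Fin n) (Fin n) ℝ)
    (hL : ∀ i j, L i j = if i = j then d i else -M i j)
    (G : SimpleGraph (Fin n))
    (hG : ∀ i j, G.Adj i j ↔ i ≠ j ∧ 0 < M i j)
    (hconn : G.Connected)
    (X : Matrix (Fin n) (Fin n) ℝ)
    (hX : X = (L + (1 / (n : ℝ)) • J)⁻¹ - (1 / (n : ℝ)) • J) :
    L * X * L = L ∧ X * L * X = X ∧ (L * X)ᵀ = L * X ∧ (X * L)ᵀ = X * L := by
  have hn0 : (n : ℝ) ≠ 0 := by positivity
  have hLv : ∀ (v : Fin n → ℝ) i, ∑ j, L i j * v j = ∑ j, M i j * (v i - v j) := by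
    intro v i
    -- On the diagonal `M i i = 0`, so `L = diagonal d - M` holds entrywise.
    have h : ∀ j, L i j * v j = (if i = j then d i * v j else 0) - M i j * v j := by
      intro j
      rw [hL]
      split_ifs with hij
      · rw [← hij, hMdiag]
        ring
      · ring
    simp only [h, Finset.sum_sub_distrib, Finset.sum_ite_eq, Finset.mem_univ, if_true, hd,
      mul_sub, Finset.sum_mul]
  have hLsymm : ∀ i j, L j i = L i j := by
    intro i j
    rw [hL, hL, hMsymm]
    by_cases hij : i = j
    · simp [hij]
    · simp [hij, Ne.symm hij]
  have hrow : ∀ i, ∑ j, L i j = 0 := fun i => by simpa using hLv (fun _ => 1) i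
  have hLJ : L * J = 0 := by
    ext i j
    simp [Matrix.mul_apply, hJ, hrow]
  have hJL : J * L = 0 := by
    ext i j
    simp only [Matrix.mul_apply, hJ, one_mul, Matrix.zero_apply]
    rw [← hrow j]
    exact Finset.sum_congr rfl fun k _ => hLsymm j k
  have hJJ : J * J = (n : ℝ) • J := by
    ext i j
    simp [Matrix.mul_apply, hJ]
  have hPP : ((1 / (n : ℝ)) • J) * ((1 / (n : ℝ)) • J) = (1 / (n : ℝ)) • J := by
    rw [Matrix.smul_mul, Matrix.mul_smul, hJJ, smul_smul (1 / (n : ℝ)) (n : ℝ),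
      one_div_mul_cancel hn0, one_smul]
  have hLP : L * ((1 / (n : ℝ)) • J) = 0 := by rw [Matrix.mul_smul, hLJ, smul_zero]
  have hPL : ((1 / (n : ℝ)) • J) * L = 0 := by rw [Matrix.smul_mul, hJL, smul_zero]
  have hPt : ((1 / (n : ℝ)) • J)ᵀ = (1 / (n : ℝ)) • J := by
    ext i j
    simp [hJ]
  refine moore_penrose_of_idempotent L _ X hPP hLP hPL hPt ?_ hX
  rw [isUnit_iff_ne_zero]
  intro hdet
  obtain ⟨v, hv0, hv⟩ := Matrix.exists_mulVec_eq_zero_iff.2 hdet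
  have hPv : ((1 / (n : ℝ)) • J) *ᵥ v = 0 := by
    have h := congrArg (fun u => ((1 / (n : ℝ)) • J) *ᵥ u) hv
    simpa only [Matrix.mulVec_mulVec, mul_add, hPL, hPP, zero_add, Matrix.mulVec_zero] using h
  have hLv0 : L *ᵥ v = 0 := by
    rwa [Matrix.add_mulVec, hPv, add_zero] at hv
  have hconst := eq_of_laplacian_kernel M hMsymm hMnonneg G (fun i j h => ((hG i j).1 h).2) hconn v
    (fun i => by rw [← hLv]; exact congrFun hLv0 i)
  apply hv0
  funext i
  -- `(P v) i` is the average of `v`, which for constant `v` is `v i`.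
  have h := congrFun hPv i
  simp only [Matrix.mulVec, dotProduct, Matrix.smul_apply, hJ, smul_eq_mul, mul_one,
    fun j => hconst j i, Finset.sum_const, Finset.card_univ, Fintype.card_fin, nsmul_eq_mul,
    Pi.zero_apply] at h
  rwa [← mul_assoc, mul_one_div_cancel hn0, one_mul] at h
end

section
/- Suppose the comparison graph G is connected, and let X := (L + (1/n)•J)⁻¹ - (1/n)•J. Then L * X = I - (1/n)•J and J * X = 0 (the identities L L⁺ = I - (1/n)J and J L⁺ = 0 used in the proof of Theorem 3.1). -/
/-!
Put `A = L + (1/n) J`. The rows and columns of `L` sum to zero, so `J L = L J = 0`, and `J J = n J`;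
hence `J A = J`. If `A` is invertible, then `J A⁻¹ = J`, and both identities follow by
expanding `L = A - (1/n) J`.

For invertibility, let `A v = 0`. Then `J v = J A v = 0`, so `L v = 0`, that is, `v` is harmonic on
the weighted graph. By the maximum principle (`harmonic_eq_of_connected`) `v` is constant, and since
its entries sum to zero it vanishes.
-/

open Matrix Finset

/-- Maximum principle: a function that is harmonic for nonnegative weights is constant if some
connected graph has positive weight on all its edges. -/
lemma harmonic_eq_of_connected {V : Type*} [Fintype V] (M : Matrix V V ℝ)
    (hM : ∀ i j, 0 ≤ M i j) (G : SimpleGraph V) (hG : ∀ i j, G.Adj i j → 0 < M i j)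
    (hconn : G.Connected) (v : V → ℝ) (hv : ∀ i, ∑ j, M i j * (v i - v j) = 0) (i j : V) :
    v i = v j := by
  have := hconn.nonempty
  obtain ⟨m, hm⟩ := Finite.exists_max v
  -- At a maximum every term of the harmonicity sum is nonnegative, so every term vanishes.
  have step : ∀ a b, G.Adj a b → v a = v m → v b = v m := by
    intro a b hab ha
    have hz := (Finset.sum_eq_zero_iff_of_nonneg (fun j _ =>
      mul_nonneg (hM a j) (sub_nonneg.2 (ha ▸ hm j)))).1 (hv a) b (Finset.mem_univ b)
    rcases mul_eq_zero.1 hz with h | h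
    · exact absurd h (hG a b hab).ne'
    · linarith
  have key : ∀ k, v k = v m := by
    intro k
    obtain ⟨w⟩ := hconn.preconnected k m
    induction w with
    | nil => rfl
    | cons hab _ ih => exact step _ _ hab.symm (ih hm step)
  rw [key i, key j]

/-- The identities `L L⁺ = I - (1/n)J` and `J L⁺ = 0`, where
`L⁺ = [L + (1/n)J]⁻¹ - (1/n)J`, used in the proof of Theorem 3.1. -/
theorem laplacian_pseudoinverse_identities (n : ℕ) (hn : 2 ≤ n)
    (M : Matrix (Fin n) (Fin n) ℝ)
    (hMsymm : ∀ i j, M j i = M i j)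
    (hMnonneg : ∀ i j, 0 ≤ M i j)
    (hMdiag : ∀ i, M i i = 0)
    (J : Matrix (Fin n) (Fin n) ℝ) (hJ : ∀ i j, J i j = 1)
    (d : Fin n → ℝ) (hd : ∀ i, d i = ∑ j, M i j)
    (L : Matrix (Fin n) (Fin n) ℝ)
    (hL : ∀ i j, L i j = if i = j then d i else -M i j)
    (G : SimpleGraph (Fin n))
    (hG : ∀ i j, G.Adj i j ↔ i ≠ j ∧ 0 < M i j)
    (hconn : G.Connected)
    (X : Matrix (Fin n) (Fin n) ℝ)
    (hX : X = (L + (1 / (n : ℝ)) • J)⁻¹ - (1 / (n : ℝ)) • J) :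
    L * X = 1 - (1 / (n : ℝ)) • J ∧ J * X = 0 := by
  have hn0 : (n : ℝ) ≠ 0 := by
    have : n ≠ 0 := by omega
    exact_mod_cast this
  -- The zero diagonal of `M` lets the two cases of `hL` merge into one formula.
  have hL' : ∀ i j, L i j = (if i = j then d i else 0) - M i j := by
    intro i j
    rw [hL]
    split_ifs with h
    · rw [← h, hMdiag, sub_zero]
    · ring
  have hJL : J * L = 0 := by
    ext i j
    simp [Matrix.mul_apply, hJ, hL', Finset.sum_sub_distrib, hd, hMsymm j]
  have hLJ : L * J = 0 := by
    ext i j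
    simp [Matrix.mul_apply, hJ, hL', Finset.sum_sub_distrib, hd]
  have hJJ : (1 / (n : ℝ)) • (J * J) = J := by
    ext i j
    simp [Matrix.mul_apply, hJ, hn0]
  set A := L + (1 / (n : ℝ)) • J with hA
  have hJA : J * A = J := by
    rw [hA, Matrix.mul_add, hJL, Matrix.mul_smul, hJJ, zero_add]
  have hdet : IsUnit A.det := by
    rw [isUnit_iff_ne_zero]
    intro h0
    obtain ⟨v, hv0, hv⟩ := Matrix.exists_mulVec_eq_zero_iff.2 h0
    have hJv : J *ᵥ v = 0 := by
      rw [← hJA, ← Matrix.mulVec_mulVec, hv, Matrix.mulVec_zero]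
    have hLv : L *ᵥ v = 0 := by
      rw [hA, Matrix.add_mulVec, Matrix.smul_mulVec, hJv, smul_zero, add_zero] at hv
      exact hv
    have hharm : ∀ i, ∑ j, M i j * (v i - v j) = 0 := by
      intro i
      have h := congrFun hLv i
      simp only [Matrix.mulVec, dotProduct, hL', sub_mul, ite_mul, zero_mul,
        Finset.sum_sub_distrib, Finset.sum_ite_eq, Finset.mem_univ, if_true, hd,
        Finset.sum_mul, Pi.zero_apply] at h
      simpa only [mul_sub, Finset.sum_sub_distrib] using h
    have hconst := harmonic_eq_of_connected M hMnonneg G (fun i j h => ((hG i j).1 h).2) hconn v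
      hharm
    apply hv0
    funext i
    have h := congrFun hJv i
    simp only [Matrix.mulVec, dotProduct, hJ, one_mul, fun j => hconst j i, Finset.sum_const,
      Finset.card_univ, Fintype.card_fin, nsmul_eq_mul, Pi.zero_apply] at h
    exact (mul_eq_zero.1 h).resolve_left hn0
  have hAA : A * A⁻¹ = 1 := Matrix.mul_nonsing_inv A hdet
  have hJAinv : J * A⁻¹ = J := by
    nth_rewrite 1 [← hJA]
    rw [Matrix.mul_assoc, hAA, Matrix.mul_one]
  have hLA : L = A - (1 / (n : ℝ)) • J := by rw [hA, add_sub_cancel_right]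
  constructor
  · have hLAinv : L * A⁻¹ = 1 - (1 / (n : ℝ)) • J := by
      nth_rewrite 1 [hLA]
      rw [Matrix.sub_mul, hAA, Matrix.smul_mul, hJAinv]
    rw [hX, Matrix.mul_sub, Matrix.mul_smul, hLJ, smul_zero, sub_zero, hLAinv]
  · rw [hX, Matrix.mul_sub, Matrix.mul_smul, hJJ, hJAinv, sub_self]
end

section
/- Suppose 𝔡 > 0. Then for every natural number k, (P - (1/(𝔡·n))•J)^k *ᵥ s = P^k *ᵥ s, where s is the scores vector (which satisfies ∑ i, s i = 0 by skew-symmetry of A); this is the identity (P - (1/(𝔡n))J)^k s = P^k s used in the proof of Theorem 4.1. -/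
/-!
The matrix `M` is symmetric with zero diagonal, so every column of `C` sums to `𝔡` and hence
`J * P = J`. Skew-symmetry of `A` makes the entries of `s` sum to zero, so `J *ᵥ s = 0`.
Therefore `J *ᵥ (P ^ k *ᵥ s) = J *ᵥ s = 0` for all `k`: the perturbation by a multiple of `J`
annihilates every iterate `P ^ k *ᵥ s`, and the identity follows by induction on `k`.
-/

open Matrix Finset

/-- The identity `(P - (1/(𝔡n))J)^k *ᵥ s = P^k *ᵥ s` used in the proof of Theorem 4.1. -/
theorem perturbed_power_mulVec_scores (n : ℕ) (hn : 2 ≤ n)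
    (M A : Matrix (Fin n) (Fin n) ℝ)
    (hMsymm : ∀ i j, M j i = M i j)
    (hMnonneg : ∀ i j, 0 ≤ M i j)
    (hMdiag : ∀ i, M i i = 0)
    (hAskew : ∀ i j, A j i = -A i j)
    (hAM : ∀ i j, M i j = 0 → A i j = 0)
    (e : Fin n → ℝ) (he : ∀ i, e i = 1)
    (J : Matrix (Fin n) (Fin n) ℝ) (hJ : ∀ i j, J i j = 1)
    (s : Fin n → ℝ) (hs : s = A *ᵥ e)
    (d : Fin n → ℝ) (hd : ∀ i, d i = ∑ j, M i j)
    (𝔡 : ℝ) (h𝔡 : IsGreatest (Set.range d) 𝔡) (h𝔡pos : 0 < 𝔡)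
    (C : Matrix (Fin n) (Fin n) ℝ)
    (hC : ∀ i j, C i j = if i = j then 𝔡 - d i else M i j)
    (P : Matrix (Fin n) (Fin n) ℝ) (hP : P = (1 / 𝔡) • C) :
    ∀ k : ℕ, (P - (1 / (𝔡 * n)) • J) ^ k *ᵥ s = P ^ k *ᵥ s := by
  have hJs : J *ᵥ s = 0 := by
    have hsum : ∑ i, s i = 0 := by
      have hs' : ∑ i, s i = ∑ i, ∑ j, A i j := by
        simp [hs, mulVec, dotProduct, he]
      -- Swapping the order of summation turns the double sum into its own negative.
      have hneg : ∑ i, ∑ j, A i j = -∑ i, ∑ j, A i j := by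
        refine (Finset.sum_comm (f := fun i j => A i j)).trans ?_
        simp only [← Finset.sum_neg_distrib]
        exact Finset.sum_congr rfl fun i _ => Finset.sum_congr rfl fun j _ => hAskew i j
      linarith
    ext i
    simpa [mulVec, dotProduct, hJ] using hsum
  have hcol : ∀ j, ∑ i, C i j = 𝔡 := by
    intro j
    -- The zero diagonal of `M` allows the diagonal correction to be split off as a summand.
    have hsplit : ∀ i, C i j = (if i = j then 𝔡 - d j else 0) + M j i := by
      intro i
      rw [hC]
      split_ifs with h
      · subst h
        simp [hMdiag]
      · simp [hMsymm j i]
    simp [hsplit, Finset.sum_add_distrib, ← hd]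
  have hJP : J * P = J := by
    ext i j
    simp only [hP, Matrix.smul_apply, mul_apply, hJ, one_mul, smul_eq_mul, ← Finset.mul_sum, hcol]
    field_simp
  have hJPk : ∀ k : ℕ, J * P ^ k = J := by
    intro k
    induction k with
    | zero => simp
    | succ k ih => rw [pow_succ, ← Matrix.mul_assoc, ih, hJP]
  intro k
  induction k with
  | zero => simp
  | succ k ih =>
    rw [pow_succ', ← mulVec_mulVec, ih, sub_mulVec, smul_mulVec, mulVec_mulVec, mulVec_mulVec,
      hJPk, hJs, smul_zero, sub_zero, ← pow_succ']
end

section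
/- Suppose the ranking problem is round-robin, i.e., M i j = 1 for all i ≠ j (and M i i = 0). Then the vector q := (1/n) • s satisfies L *ᵥ q = s and ∑ i, q i = 0; hence the least squares rating equals the scores vector divided by n, so the least squares and row sum rankings coincide (score consistency in the round-robin case). -/
/-! In the round-robin case the Laplacian is `L = n I - J`, with `J` the all-ones matrix.
Skew-symmetry of `A` makes the scores sum to zero, so `J s = 0` and `L s = n s`; dividing by `n`
gives both claims. -/

open Matrix Finset

/-- Score consistency in the round-robin case: if `M i j = 1` for all `i ≠ j`, then
`(1/n) • s` is the least squares rating. -/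
theorem round_robin_score_consistency (n : ℕ) (hn : 2 ≤ n)
    (M A : Matrix (Fin n) (Fin n) ℝ)
    (hMsymm : ∀ i j, M j i = M i j)
    (hMnonneg : ∀ i j, 0 ≤ M i j)
    (hMdiag : ∀ i, M i i = 0)
    (hAskew : ∀ i j, A j i = -A i j)
    (hAM : ∀ i j, M i j = 0 → A i j = 0)
    (e : Fin n → ℝ) (he : ∀ i, e i = 1)
    (s : Fin n → ℝ) (hs : s = A *ᵥ e)
    (d : Fin n → ℝ) (hd : ∀ i, d i = ∑ j, M i j)
    (L : Matrix (Fin n) (Fin n) ℝ)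
    (hL : ∀ i j, L i j = if i = j then d i else -M i j)
    (hRR : ∀ i j, i ≠ j → M i j = 1) :
    L *ᵥ ((1 / (n : ℝ)) • s) = s ∧ (∑ i, ((1 / (n : ℝ)) • s) i) = 0 := by
  have hn0 : (n : ℝ) ≠ 0 := by
    have : n ≠ 0 := by omega
    exact_mod_cast this
  have hs' : ∀ i, s i = ∑ j, A i j := by
    intro i
    simp [hs, Matrix.mulVec, dotProduct, he]
  have hsum : ∑ i, s i = 0 := by
    -- Swapping the two summation indices changes the sign of the total.
    have h : ∑ i, ∑ j, A i j = -∑ i, ∑ j, A i j := by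
      refine Finset.sum_comm.trans ?_
      simp only [← Finset.sum_neg_distrib]
      exact Finset.sum_congr rfl fun i _ => Finset.sum_congr rfl fun j _ => hAskew i j
    simp only [hs']
    linarith
  have hM : ∀ i j, M i j = 1 - if i = j then 1 else 0 := by
    intro i j
    by_cases h : i = j
    · subst h
      simp [hMdiag]
    · simp [h, hRR i j h]
  have hd' : ∀ i, d i = n - 1 := by
    intro i
    simp [hd, hM, Finset.sum_sub_distrib]
  have hL' : ∀ i j, L i j = (if i = j then (n : ℝ) else 0) - 1 := by
    intro i j
    by_cases h : i = j
    · simp [hL, h, hd']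
    · simp [hL, h, hRR i j h]
  constructor
  · ext i
    rw [Matrix.mulVec_smul, Pi.smul_apply]
    simp only [Matrix.mulVec, dotProduct, hL', sub_mul, ite_mul, zero_mul, one_mul,
      Finset.sum_sub_distrib, Finset.sum_ite_eq, Finset.mem_univ, if_true, hsum, sub_zero,
      smul_eq_mul]
    field_simp
  · simp only [Pi.smul_apply, smul_eq_mul, ← Finset.mul_sum, hsum, mul_zero]
end

section
/- Let m be a real number. The generalized row sum map ε ↦ x(ε) := (I + ε•L)⁻¹ *ᵥ ((1 + ε·m·n) • s) is differentiable at ε = 0 with derivative (m·n) • s - L *ᵥ s; equivalently, componentwise x(ε) i = s i + ε·((m·n - d i)·(s i) + ∑_{j ≠ i} M i j · s j) + o(ε) as ε → 0 (the first-order expansion of the generalized row sum rating in ε). -/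
open Matrix Finset

/-! The resolvent `ε ↦ (1 + ε • L)⁻¹` has derivative `-L` at `0`, because inversion in the complete
normed algebra of matrices has derivative `-H` at `1` in direction `H`. The theorem is then the
product rule applied to each coordinate `∑ j, (1 + ε • L)⁻¹ i j * ((1 + ε * m * n) * s j)`. -/

/-- Stated entrywise, so that the statement involves no choice of a norm on matrices. -/
theorem hasDerivAt_one_add_smul_inv_apply {n : ℕ} (L : Matrix (Fin n) (Fin n) ℝ) (i j : Fin n) :
    HasDerivAt (fun ε : ℝ => ((1 : Matrix (Fin n) (Fin n) ℝ) + ε • L)⁻¹ i j) (-L i j) 0 := by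
  -- Any submultiplicative norm serves here; the `ℓ∞` operator norm is the one chosen.
  let _ : NormedRing (Matrix (Fin n) (Fin n) ℝ) := Matrix.linftyOpNormedRing
  let _ : NormedAlgebra ℝ (Matrix (Fin n) (Fin n) ℝ) := Matrix.linftyOpNormedAlgebra
  have : CompleteSpace (Matrix (Fin n) (Fin n) ℝ) := FiniteDimensional.complete ℝ _
  have hlin : HasDerivAt (fun ε : ℝ => (1 : Matrix (Fin n) (Fin n) ℝ) + ε • L) L 0 := by
    refine (((hasDerivAt_id (0 : ℝ)).smul_const L).const_add 1).congr_deriv ?_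
    simp
  have hinv := hasFDerivAt_ringInverse (𝕜 := ℝ) (1 : (Matrix (Fin n) (Fin n) ℝ)ˣ)
  have hres := hinv.comp_hasDerivAt_of_eq (0 : ℝ) hlin (by simp)
  let entry : Matrix (Fin n) (Fin n) ℝ →L[ℝ] ℝ :=
    LinearMap.toContinuousLinearMap (Matrix.entryLinearMap ℝ ℝ i j)
  have hentry := entry.hasFDerivAt.comp_hasDerivAt (0 : ℝ) hres
  simp only [Matrix.nonsing_inv_eq_ringInverse]
  refine hentry.congr_deriv ?_
  change (-(_ : Matrix (Fin n) (Fin n) ℝ)) i j = _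
  simp

/-- First-order expansion of the generalized row sum rating in ε: the map
`ε ↦ (I + ε•L)⁻¹ *ᵥ ((1 + ε·m·n) • s)` has derivative `(m·n) • s - L *ᵥ s` at `ε = 0`. -/
theorem generalized_row_sum_deriv_at_zero (n : ℕ) (hn : 2 ≤ n)
    (M A : Matrix (Fin n) (Fin n) ℝ)
    (hMsymm : ∀ i j, M j i = M i j)
    (hMnonneg : ∀ i j, 0 ≤ M i j)
    (hMdiag : ∀ i, M i i = 0)
    (hAskew : ∀ i j, A j i = -A i j)
    (hAM : ∀ i j, M i j = 0 → A i j = 0)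
    (e : Fin n → ℝ) (he : ∀ i, e i = 1)
    (s : Fin n → ℝ) (hs : s = A *ᵥ e)
    (d : Fin n → ℝ) (hd : ∀ i, d i = ∑ j, M i j)
    (L : Matrix (Fin n) (Fin n) ℝ)
    (hL : ∀ i j, L i j = if i = j then d i else -M i j)
    (m : ℝ) :
    HasDerivAt
      (fun ε : ℝ => ((1 : Matrix (Fin n) (Fin n) ℝ) + ε • L)⁻¹ *ᵥ ((1 + ε * m * n) • s))
      ((m * n) • s - L *ᵥ s) 0 := by
  rw [hasDerivAt_pi]
  intro i
  have hfac : HasDerivAt (fun ε : ℝ => 1 + ε * m * n) (m * n) 0 := by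
    simpa using (((hasDerivAt_id (0 : ℝ)).mul_const m).mul_const (n : ℝ)).const_add 1
  have hsum := HasDerivAt.fun_sum (u := Finset.univ) fun j _ =>
    (hasDerivAt_one_add_smul_inv_apply L i j).mul (hfac.mul_const (s j))
  refine hsum.congr_deriv ?_
  simp [Matrix.mulVec, dotProduct, Finset.sum_add_distrib, Matrix.one_apply]
  ring
end
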